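/- arXiv:1312.7819 — 2 statements merged into one kernel-verified Lean document; each statement's English description precedes it below -/
import Mathlib

section
/- On an open subset of ℝ³ with coordinates (x¹, x², x³) = (x, y, z), let the metric be given by g = (dz + β₁dx¹ + β₂dx²)² + h_{ab}dx^adx^b, i.e. g_{33} = 1, g_{a3} = g_{3a} = β_a and g_{ab} = h_{ab} + β_aβ_b for a,b ∈ {1,2}, where β₁, β₂ are smooth functions of (x¹,x²) only (independent of z) and (h_{ab}) is a smooth positive-definite 2×2 matrix-valued function of (x¹,x²,z). Let β > 0 be a smooth function of (x¹,x²) only, let c ∈ ℝ, and let ε = ±1. Then the symmetric tensor field T^{ij} := ε·(β·(det(h_{ab}))^{−1/2}·δ^i_z δ^j_z + c·g^{ij}) satisfies the momentum constraint ∇_j T^{ij} = 0. -/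
open Matrix

noncomputable section

abbrev V3 := Fin 3 → ℝ

/-- Partial derivative `∂ᵢ f` on `ℝ³`. -/
def pd (i : Fin 3) (f : V3 → ℝ) (x : V3) : ℝ := fderiv ℝ f x (Pi.single i 1)

/-- Christoffel symbols `Γ^i_{jk} = (1/2) g^{il}(∂_j g_{lk} + ∂_k g_{jl} - ∂_l g_{jk})`. -/
def christoffel (g : V3 → Matrix (Fin 3) (Fin 3) ℝ) (i j k : Fin 3) (x : V3) : ℝ :=
  (1 / 2) * ∑ l, (g x)⁻¹ i l *
    (pd j (fun y => g y l k) x + pd k (fun y => g y j l) x - pd l (fun y => g y j k) x)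

/-- `|g| = (det g)^{1/2}`. -/
def sqrtDet (g : V3 → Matrix (Fin 3) (Fin 3) ℝ) (x : V3) : ℝ := Real.sqrt (g x).det

/-- Covariant divergence of a contravariant symmetric 2-tensor:
`∇_j T^{ij} = |g|⁻¹ ∂_j(|g| T^{ij}) + Γ^i_{jk} T^{jk}`. -/
def covDivUp (g T : V3 → Matrix (Fin 3) (Fin 3) ℝ) (i : Fin 3) (x : V3) : ℝ :=
  (sqrtDet g x)⁻¹ * (∑ j, pd j (fun y => sqrtDet g y * T y i j) x) +
    ∑ j, ∑ k, christoffel g i j k x * T x j k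

/-- Covariant divergence in mixed form, for a contravariant tensor `T^{ij}`:
`∇_j T_i^{ j} = |g|⁻¹ ∂_j(|g| g_{ik} T^{kj}) - (1/2) T^{jk} ∂_i g_{jk}`. -/
def covDivLow (g T : V3 → Matrix (Fin 3) (Fin 3) ℝ) (i : Fin 3) (x : V3) : ℝ :=
  (sqrtDet g x)⁻¹ * (∑ j, pd j (fun y => sqrtDet g y * (∑ k, g y i k * T y k j)) x) -
    (1 / 2) * ∑ j, ∑ k, T x j k * pd i (fun y => g y j k) x

theorem pd_add_fun (j : Fin 3) {f k : V3 → ℝ} {x : V3} (hf : DifferentiableAt ℝ f x)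
    (hk : DifferentiableAt ℝ k x) : pd j (fun y => f y + k y) x = pd j f x + pd j k x := by
  unfold pd; rw [fderiv_fun_add hf hk]; rfl

theorem pd_sub_fun (j : Fin 3) {f k : V3 → ℝ} {x : V3} (hf : DifferentiableAt ℝ f x)
    (hk : DifferentiableAt ℝ k x) : pd j (fun y => f y - k y) x = pd j f x - pd j k x := by
  unfold pd; rw [fderiv_fun_sub hf hk]; rfl

theorem pd_mul_fun (j : Fin 3) {f k : V3 → ℝ} {x : V3} (hf : DifferentiableAt ℝ f x)
    (hk : DifferentiableAt ℝ k x) :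
    pd j (fun y => f y * k y) x = f x * pd j k x + k x * pd j f x := by
  unfold pd; rw [fderiv_fun_mul hf hk]; rfl

theorem pd_neg_fun (j : Fin 3) (f : V3 → ℝ) (x : V3) :
    pd j (fun y => -f y) x = -pd j f x := by
  unfold pd; rw [fderiv_fun_neg]; rfl

theorem pd_const_fun (j : Fin 3) (c : ℝ) (x : V3) : pd j (fun _ => c) x = 0 := by
  unfold pd; simp

theorem pd_eta (j : Fin 3) (f : V3 → ℝ) (x : V3) : pd j (fun y => f y) x = pd j f x := rfl

theorem pd_congr (j : Fin 3) {f k : V3 → ℝ} {x : V3} (hf : f =ᶠ[nhds x] k) :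
    pd j f x = pd j k x := by
  unfold pd; rw [hf.fderiv_eq]

theorem hasFDerivAt_rs {D : V3 → ℝ} {x : V3} (hD : DifferentiableAt ℝ D x)
    (h0 : 0 < D x) : HasFDerivAt (fun y => (Real.sqrt (D y))⁻¹)
      ((-(1 / 2) * ((Real.sqrt (D x))⁻¹) ^ 3) • fderiv ℝ D x) x := by
  have hs : Real.sqrt (D x) ≠ 0 := (Real.sqrt_pos.2 h0).ne'
  have h1 : HasDerivAt (fun t : ℝ => (Real.sqrt t)⁻¹) (-(1 / 2) * ((Real.sqrt (D x))⁻¹) ^ 3)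
      (D x) := by
    have := (Real.hasDerivAt_sqrt h0.ne').fun_inv hs
    have he : -(1 / 2) * ((Real.sqrt (D x))⁻¹) ^ 3 =
        -(1 / (2 * Real.sqrt (D x))) / Real.sqrt (D x) ^ 2 := by
      field_simp
    rw [he]
    exact this
  exact h1.comp_hasFDerivAt x hD.hasFDerivAt

theorem pd_ind {f : V3 → ℝ} {x : V3} (hf : DifferentiableAt ℝ f x)
    (hi : ∀ x t, f (Function.update x 2 t) = f x) : pd 2 f x = 0 := by
  have h1 := hf.hasFDerivAt.hasLineDerivAt (Pi.single 2 1)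
  have h2 : HasLineDerivAt ℝ f 0 x (Pi.single 2 1) := by
    unfold HasLineDerivAt
    have : (fun t : ℝ => f (x + t • Pi.single 2 1)) = fun _ => f x := by
      funext t
      rw [← hi x (x 2 + t)]
      congr 1
      ext i
      fin_cases i <;> simp [Function.update]
    rw [this]
    exact hasDerivAt_const _ _
  exact h1.unique h2

/-- the metric in terms of scalar functions -/
def gm (a b bt d p q : ℝ) : Matrix (Fin 3) (Fin 3) ℝ :=
  !![a + p * p, b + p * q, p; bt + q * p, d + q * q, q; p, q, 1]

/-- explicit adjugate of `gm` -/
def ga (a b bt d p q : ℝ) : Matrix (Fin 3) (Fin 3) ℝ :=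
  !![d, -1 * b, b * q - d * p;
     -1 * bt, a, bt * p - a * q;
     bt * q - d * p, b * p - a * q, a * d - b * bt + d * (p * p) + a * (q * q) - (b + bt) * (p * q)]

theorem gm_det (a b bt d p q : ℝ) : (gm a b bt d p q).det = a * d - b * bt := by
  simp [gm, Matrix.det_fin_three]; ring

theorem gm_inv (a b bt d p q : ℝ) (h : a * d - b * bt ≠ 0) :
    (gm a b bt d p q)⁻¹ = (a * d - b * bt)⁻¹ • ga a b bt d p q := by
  apply Matrix.inv_eq_right_inv
  rw [Matrix.mul_smul]
  have : gm a b bt d p q * ga a b bt d p q = (a * d - b * bt) • 1 := by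
    ext i j
    fin_cases i <;> fin_cases j <;>
      simp [gm, ga, Matrix.mul_apply, Fin.sum_univ_three, Matrix.one_apply] <;> ring
  rw [this, smul_smul, inv_mul_cancel₀ h, one_smul]

set_option maxHeartbeats 4000000 in
theorem core (a b bt d p q e : V3 → ℝ) (c ε : ℝ) (x : V3)
    (ha : DifferentiableAt ℝ a x) (hb : DifferentiableAt ℝ b x) (hbt : DifferentiableAt ℝ bt x)
    (hd : DifferentiableAt ℝ d x) (hp : DifferentiableAt ℝ p x) (hq : DifferentiableAt ℝ q x)
    (he : DifferentiableAt ℝ e x) (hbb : bt =ᶠ[nhds x] b)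
    (hD : 0 < a x * d x - b x * bt x)
    (hp2 : pd 2 p x = 0) (hq2 : pd 2 q x = 0) (he2 : pd 2 e x = 0)
    (g T : V3 → Matrix (Fin 3) (Fin 3) ℝ)
    (hg : ∀ y, g y = gm (a y) (b y) (bt y) (d y) (p y) (q y))
    (hT : ∀ y i j, T y i j = ε * (e y * (Real.sqrt (a y * d y - b y * bt y))⁻¹ *
        (if i = 2 ∧ j = 2 then 1 else 0) + c * (g y)⁻¹ i j)) (i : Fin 3) :
    covDivUp g T i x = 0 := by
  have hgf : g = fun y => gm (a y) (b y) (bt y) (d y) (p y) (q y) := funext hg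
  have hDd : DifferentiableAt ℝ (fun y => a y * d y - b y * bt y) x := by fun_prop
  obtain ⟨r, hr⟩ : ∃ r : V3 → ℝ, r = fun y => (Real.sqrt (a y * d y - b y * bt y))⁻¹ := ⟨_, rfl⟩
  have hrf : HasFDerivAt r _ x := hr ▸ hasFDerivAt_rs hDd hD
  have hrd : DifferentiableAt ℝ r x := hrf.differentiableAt
  have hrx : (Real.sqrt (a x * d x - b x * bt x))⁻¹ = r x := by rw [hr]
  have hrp : ∀ j, pd j r x = -(1 / 2) * r x ^ 3 * pd j (fun y => a y * d y - b y * bt y) x := by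
    intro j
    rw [← hrx]
    unfold pd
    rw [hrf.fderiv]
    simp
  have hr2 : (a x * d x - b x * bt x)⁻¹ = r x ^ 2 := by
    rw [← hrx, inv_pow, Real.sq_sqrt hD.le]
  have hr3 : r x ^ 2 * (a x * d x - b x * bt x) = 1 := by
    rw [← hr2, inv_mul_cancel₀ hD.ne']
  have hr0 : r x ≠ 0 := by
    intro h0; rw [h0] at hr3; norm_num at hr3
  have hev : ∀ᶠ y in nhds x, 0 < a y * d y - b y * bt y :=
    hDd.continuousAt.eventually (lt_mem_nhds hD)
  have hF : ∀ i j, pd j (fun y => sqrtDet g y * T y i j) x =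
      pd j (fun y => ε * (e y * (if i = 2 ∧ j = 2 then 1 else 0) +
        c * (r y * ga (a y) (b y) (bt y) (d y) (p y) (q y) i j))) x := by
    intro i j
    apply pd_congr
    filter_upwards [hev] with y hy
    have hs : Real.sqrt (a y * d y - b y * bt y) ≠ 0 := (Real.sqrt_pos.2 hy).ne'
    have hss : (a y * d y - b y * bt y)⁻¹ = (Real.sqrt (a y * d y - b y * bt y))⁻¹ ^ 2 := by
      rw [inv_pow, Real.sq_sqrt hy.le]
    rw [hT, hg, gm_inv _ _ _ _ _ _ hy.ne', hss, hr]
    simp only [sqrtDet, hg, gm_det, Matrix.smul_apply, smul_eq_mul]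
    field_simp
  have hbx : bt x = b x := hbb.self_of_nhds
  have hbp : ∀ j, pd j bt x = pd j b x := fun j => pd_congr j hbb
  have hTx : ∀ i j, T x i j = ε * (e x * r x *
        (if i = 2 ∧ j = 2 then 1 else 0) + c * (r x ^ 2 *
          ga (a x) (b x) (bt x) (d x) (p x) (q x) i j)) := by
    intro i j
    rw [hT, hrx, hg, gm_inv _ _ _ _ _ _ hD.ne', hr2]
    simp only [Matrix.smul_apply, smul_eq_mul]
  have hi : (g x)⁻¹ = r x ^ 2 • ga (a x) (b x) (bt x) (d x) (p x) (q x) := by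
    rw [hg, gm_inv _ _ _ _ _ _ hD.ne', hr2]
  have hsd : (sqrtDet g x)⁻¹ = r x := by
    simp only [sqrtDet, hg, gm_det, hrx]
  unfold covDivUp christoffel
  simp only [hi]
  simp only [hF, hTx, hsd, hg]
  rw [hbx] at hr3
  fin_cases i
  · simp [Fin.sum_univ_three, ga, gm]
    simp (disch := fun_prop) only [pd_add_fun, pd_neg_fun, pd_sub_fun, pd_mul_fun, pd_const_fun, pd_eta, hrp, hp2, hq2, he2,
      hbp, hbx]
    linear_combination (-(r x ^ 2 * ε * c * (pd 0 d x - pd 1 b x + q x * pd 2 b x - p x * pd 2 d x))) * hr3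
  · simp [Fin.sum_univ_three, ga, gm]
    simp (disch := fun_prop) only [pd_add_fun, pd_neg_fun, pd_sub_fun, pd_mul_fun, pd_const_fun, pd_eta, hrp, hp2, hq2, he2,
      hbp, hbx]
    linear_combination (-(r x ^ 2 * ε * c * (pd 1 a x - pd 0 b x + p x * pd 2 b x - q x * pd 2 a x))) * hr3
  · simp [Fin.sum_univ_three, ga, gm]
    simp (disch := fun_prop) only [pd_add_fun, pd_neg_fun, pd_sub_fun, pd_mul_fun, pd_const_fun, pd_eta, hrp, hp2, hq2, he2,
      hbp, hbx]
    linear_combination (-(r x ^ 2 * ε * c * (b x * pd 0 q x + q x * pd 0 b x - d x * pd 0 p x - p x * pd 0 d x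
        + b x * pd 1 p x + p x * pd 1 b x - a x * pd 1 q x - q x * pd 1 a x
        + a x * pd 2 d x + d x * pd 2 a x - 2 * b x * pd 2 b x + p x * p x * pd 2 d x
        + q x * q x * pd 2 a x - 2 * p x * q x * pd 2 b x))) * hr3

/-- **Second family of solutions in Proposition 3.2, equations (3u)–(3b)**: for the metric
`g = (dz + β₁dx¹ + β₂dx²)² + h_{ab} dx^a dx^b` with `β₁, β₂` independent of `z = x³`, and
`β > 0` independent of `z`, the tensor
`T^{ij} = ±(β (det h)^{-1/2} δ^i_z δ^j_z + c g^{ij})` satisfies the momentum constraint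
`∇_j T^{ij} = 0`. -/
theorem momentum_constraint_solutions_3u_3b
    (U : Set V3) (hU : IsOpen U)
    (h : V3 → Matrix (Fin 2) (Fin 2) ℝ) (β₁ β₂ β : V3 → ℝ) (c ε : ℝ)
    (hε : ε = 1 ∨ ε = -1)
    (hh_smooth : ∀ a b, ContDiffOn ℝ (⊤ : ℕ∞) (fun x => h x a b) U)
    (hh_pos : ∀ x ∈ U, (h x).PosDef)
    (hβ₁_smooth : ContDiffOn ℝ (⊤ : ℕ∞) β₁ U)
    (hβ₂_smooth : ContDiffOn ℝ (⊤ : ℕ∞) β₂ U)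
    (hβ₁_ind : ∀ x t, β₁ (Function.update x 2 t) = β₁ x)
    (hβ₂_ind : ∀ x t, β₂ (Function.update x 2 t) = β₂ x)
    (hβ_smooth : ContDiffOn ℝ (⊤ : ℕ∞) β U) (hβ_pos : ∀ x ∈ U, 0 < β x)
    (hβ_ind : ∀ x t, β (Function.update x 2 t) = β x) :
    let g : V3 → Matrix (Fin 3) (Fin 3) ℝ := fun x =>
      !![h x 0 0 + β₁ x * β₁ x, h x 0 1 + β₁ x * β₂ x, β₁ x;
         h x 1 0 + β₂ x * β₁ x, h x 1 1 + β₂ x * β₂ x, β₂ x;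
         β₁ x, β₂ x, 1]
    let T : V3 → Matrix (Fin 3) (Fin 3) ℝ := fun x =>
      Matrix.of fun i j =>
        ε * (β x * (Real.sqrt (h x).det)⁻¹ * (if i = 2 ∧ j = 2 then 1 else 0) +
          c * (g x)⁻¹ i j)
    ∀ i, ∀ x ∈ U, covDivUp g T i x = 0 := by
  intro g T i x hx
  have hn : U ∈ nhds x := hU.mem_nhds hx
  have hdiff : ∀ {f : V3 → ℝ}, ContDiffOn ℝ (⊤ : ℕ∞) f U → DifferentiableAt ℝ f x :=
    fun hf => (hf.contDiffAt hn).differentiableAt (by simp)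
  have hdet : ∀ y, (h y).det = h y 0 0 * h y 1 1 - h y 0 1 * h y 1 0 :=
    fun y => Matrix.det_fin_two _
  refine core (fun y => h y 0 0) (fun y => h y 0 1) (fun y => h y 1 0) (fun y => h y 1 1)
    β₁ β₂ β c ε x (hdiff (hh_smooth _ _)) (hdiff (hh_smooth _ _)) (hdiff (hh_smooth _ _))
    (hdiff (hh_smooth _ _)) (hdiff hβ₁_smooth) (hdiff hβ₂_smooth) (hdiff hβ_smooth) ?_ ?_
    (pd_ind (hdiff hβ₁_smooth) hβ₁_ind) (pd_ind (hdiff hβ₂_smooth) hβ₂_ind)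
    (pd_ind (hdiff hβ_smooth) hβ_ind) g T (fun y => rfl) ?_ i
  · filter_upwards [hn] with y hy
    simpa using (hh_pos y hy).isHermitian.apply 0 1
  · have := (hh_pos x hx).det_pos
    rwa [hdet] at this
  · intro y i j
    simp only [T, hdet, Matrix.of_apply]
end
end

section
/- On an open subset of ℝ³ with coordinates (x, y, z), let α > 0 be a smooth function of (x,y,z), let f > 0 be a smooth function of (x,y) only, let h > 0 be a smooth function of (y,z) only, and let β be a smooth function of (x,y,z) with ∂_x∂_z β = 0. Define the metric g = α²dy² + f²(dx + β_{,x}dy)² + h²(dz − β_{,z}dy)², i.e. g_{xx} = f², g_{xy} = f²β_{,x}, g_{zz} = h², g_{yz} = −h²β_{,z}, g_{yy} = α² + f²β_{,x}² + h²β_{,z}², g_{xz} = 0. Define the symmetric tensor field T by T^{xz} = T^{zx} = 1/(2αfh) and all other components zero. Then T is trace-free, g_{ij}T^{ij} = 0, and T satisfies the momentum constraint ∇_j T^{ij} = 0. -/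
open Matrix

noncomputable section

theorem pd_indep (i : Fin 3) (f : V3 → ℝ) (hf : ∀ x t, f (Function.update x i t) = f x) (x : V3)
    (hd : DifferentiableAt ℝ f x) : pd i f x = 0 := by
  unfold pd
  have h1 := (hd.hasFDerivAt.hasLineDerivAt (Pi.single i 1)).lineDeriv
  rw [← h1]
  unfold lineDeriv
  have : (fun t : ℝ => f (x + t • (Pi.single i 1 : V3))) = fun _ => f x := by
    funext t
    rw [← hf x (x i + t)]
    congr 1
    funext j
    by_cases hj : j = i
    · subst hj; simp
    · simp [hj]
  rw [this]; simp

theorem pd_mul_indep (i : Fin 3) (f u : V3 → ℝ) (hf : ∀ x t, f (Function.update x i t) = f x)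
    (x : V3) (hd : DifferentiableAt ℝ f x) (hu : DifferentiableAt ℝ u x) :
    pd i (fun y => f y ^ 2 * u y) x = f x ^ 2 * pd i u x := by
  have h2 : pd i (fun y => f y ^ 2) x = 0 :=
    pd_indep i _ (fun x t => by rw [hf]) x (hd.pow 2)
  unfold pd at *
  have h3 : DifferentiableAt ℝ (fun y => f y ^ 2) x := hd.pow 2
  rw [fderiv_fun_mul h3 hu]
  simp only [ContinuousLinearMap.add_apply, ContinuousLinearMap.smul_apply, h2, smul_eq_mul,
    mul_zero, add_zero]

theorem pd_const (i : Fin 3) (c : ℝ) (x : V3) : pd i (fun _ => c) x = 0 := by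
  simp [pd]

theorem pd_neg (i : Fin 3) (u : V3 → ℝ) (x : V3) : pd i (fun y => - u y) x = - pd i u x := by
  simp [pd, fderiv_fun_neg]

theorem pd_pd (i : Fin 3) (j : Fin 3) (β : V3 → ℝ) (x : V3)
    (hd : DifferentiableAt ℝ (fderiv ℝ β) x) :
    pd i (fun y => pd j β y) x = fderiv ℝ (fderiv ℝ β) x (Pi.single i 1) (Pi.single j 1) := by
  unfold pd
  rw [fderiv_clm_apply hd (differentiableAt_const _)]
  simp

/-- **Corollary 3.1, equations (23c)–(25)**: for the metric
`g = α²dy² + f²(dx + β_{,x}dy)² + h²(dz - β_{,z}dy)²` (coordinates `(x,y,z) = (x¹,x²,x³)`)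
with `f = f(x,y)`, `h = h(y,z)`, `β_{,xz} = 0`, the trace-free tensor
`T^{ij} = (αfh)⁻¹ δ^{(i}_x δ^{j)}_z` satisfies the momentum constraint `∇_j T^{ij} = 0`. -/
theorem momentum_constraint_corollary31
    (U : Set V3) (hU : IsOpen U)
    (α f h β : V3 → ℝ)
    (hα_smooth : ContDiffOn ℝ (⊤ : ℕ∞) α U) (hα_pos : ∀ x ∈ U, 0 < α x)
    (hf_smooth : ContDiffOn ℝ (⊤ : ℕ∞) f U) (hf_pos : ∀ x ∈ U, 0 < f x)
    (hf_ind : ∀ x t, f (Function.update x 2 t) = f x)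
    (hh_smooth : ContDiffOn ℝ (⊤ : ℕ∞) h U) (hh_pos : ∀ x ∈ U, 0 < h x)
    (hh_ind : ∀ x t, h (Function.update x 0 t) = h x)
    (hβ_smooth : ContDiffOn ℝ (⊤ : ℕ∞) β U)
    (hβ_xz : ∀ x ∈ U, pd 0 (fun y => pd 2 β y) x = 0) :
    let g : V3 → Matrix (Fin 3) (Fin 3) ℝ := fun x =>
      !![f x ^ 2, f x ^ 2 * pd 0 β x, 0;
         f x ^ 2 * pd 0 β x,
           α x ^ 2 + f x ^ 2 * (pd 0 β x) ^ 2 + h x ^ 2 * (pd 2 β x) ^ 2,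
           -(h x ^ 2 * pd 2 β x);
         0, -(h x ^ 2 * pd 2 β x), h x ^ 2]
    let T : V3 → Matrix (Fin 3) (Fin 3) ℝ := fun x =>
      !![0, 0, (2 * α x * f x * h x)⁻¹;
         0, 0, 0;
         (2 * α x * f x * h x)⁻¹, 0, 0]
    (∀ x ∈ U, ∑ i, ∑ j, g x i j * T x i j = 0) ∧
    (∀ i, ∀ x ∈ U, covDivUp g T i x = 0) := by
  intro g T
  refine ⟨?_, ?_⟩
  · intro x hx
    simp [g, T, Fin.sum_univ_three]
  intro i x hx
  have hn := hU.mem_nhds hx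
  have hfd : DifferentiableAt ℝ f x := (hf_smooth.contDiffAt hn).differentiableAt (by simp)
  have hhd : DifferentiableAt ℝ h x := (hh_smooth.contDiffAt hn).differentiableAt (by simp)
  have hβc := hβ_smooth.contDiffAt hn
  have hβ' : DifferentiableAt ℝ (fderiv ℝ β) x :=
    (hβc.fderiv_right (m := 1) (WithTop.coe_le_coe.2 (le_top : (1 + 1 : ℕ∞) ≤ ⊤))).differentiableAt (by simp)
  have hpd : ∀ j, DifferentiableAt ℝ (fun y => pd j β y) x := fun j =>
    hβ'.clm_apply (differentiableAt_const _)
  have hsymm : pd 2 (fun y => pd 0 β y) x = 0 := by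
    rw [← hβ_xz x hx, pd_pd _ _ _ _ hβ', pd_pd _ _ _ _ hβ']
    exact (hβc.isSymmSndFDerivAt (by simp; exact WithTop.coe_le_coe.2 (le_top : (2 : ℕ∞) ≤ ⊤))) _ _
  have e1 : pd 2 (fun y => f y ^ 2) x = 0 :=
    pd_indep 2 _ (fun x t => by rw [hf_ind]) x (hfd.pow 2)
  have e2 : pd 0 (fun y => h y ^ 2) x = 0 :=
    pd_indep 0 _ (fun x t => by rw [hh_ind]) x (hhd.pow 2)
  have e3 : pd 2 (fun y => f y ^ 2 * pd 0 β y) x = 0 := by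
    rw [pd_mul_indep 2 f _ hf_ind x hfd (hpd 0), hsymm, mul_zero]
  have e4 : pd 0 (fun y => -(h y ^ 2 * pd 2 β y)) x = 0 := by
    rw [pd_neg, pd_mul_indep 0 h _ hh_ind x hhd (hpd 2), hβ_xz x hx, mul_zero, neg_zero]
  have c1 : christoffel g i 0 2 x = 0 := by
    simp [christoffel, g, Fin.sum_univ_three, e1, e2, e3, e4, pd_const]
  have c2 : christoffel g i 2 0 x = 0 := by
    simp [christoffel, g, Fin.sum_univ_three, e1, e2, e3, e4, pd_const]
  have hs : ∀ y ∈ U, sqrtDet g y = α y * f y * h y := by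
    intro y hy
    have : (g y).det = (α y * f y * h y) ^ 2 := by
      simp [g, Matrix.det_fin_three]; ring
    rw [sqrtDet, this, Real.sqrt_sq]
    have := hα_pos y hy
    have := hf_pos y hy
    have := hh_pos y hy
    positivity
  have hconst : ∀ j, pd j (fun y => sqrtDet g y * (2 * α y * f y * h y)⁻¹) x = 0 := by
    intro j
    have : (fun y => sqrtDet g y * (2 * α y * f y * h y)⁻¹) =ᶠ[nhds x] fun _ => (1 / 2 : ℝ) := by
      filter_upwards [hn] with y hy
      rw [hs y hy]
      have := (hα_pos y hy).ne'
      have := (hf_pos y hy).ne'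
      have := (hh_pos y hy).ne'
      field_simp
    rw [pd, this.fderiv_eq]
    simp
  have hT : ∀ j, pd j (fun y => sqrtDet g y * T y i j) x = 0 := by
    intro j
    fin_cases i <;> fin_cases j <;> simp [T, pd_const] <;>
      simpa using hconst _
  unfold covDivUp
  simp only [hT]
  simp [Fin.sum_univ_three, T, c1, c2]
end
end
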